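/- Let ρ*(π, m, δ) denote the unique ρ ∈ (0,1) satisfying π·δ·g(ρ/(2πmδ)) + (1−π)·δ·g(ρ/(2(1−π)mδ)) = 1 − ρ². Then: (i) for fixed π ∈ (0,1) and δ > 0, the map m ↦ ρ*(π,m,δ) is strictly increasing on (0,∞); (ii) for fixed π ∈ (0,1) and m > 0, the map δ ↦ ρ*(π,m,δ) is strictly increasing on (0,∞); (iii) for fixed m > 0 and δ > 0, the map π ↦ ρ*(π,m,δ) is strictly increasing on (0, 1/2). -/

import Mathlib

open MeasureTheory

/-- The standard normal density. -/
noncomputable def normPDF (x : ℝ) : ℝ := Real.exp (-x ^ 2 / 2) / Real.sqrt (2 * Real.pi)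

/-- The standard normal cumulative distribution function. -/
noncomputable def normCDF (x : ℝ) : ℝ := ∫ t in Set.Iic x, normPDF t

/-- `g₁(x) = x·Φ(x) + φ(x)`, equal to `E[(Z+x)₊]` for standard normal `Z`. -/
noncomputable def g1 (x : ℝ) : ℝ := x * normCDF x + normPDF x

/-- `g₂(x) = (x²+1)·Φ(x) + x·φ(x)`, equal to `E[(Z+x)₊²]` for standard normal `Z`. -/
noncomputable def g2 (x : ℝ) : ℝ := (x ^ 2 + 1) * normCDF x + x * normPDF x

/-- The inverse of `g₁` (on its range `(0,∞)`). -/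
noncomputable def g1inv : ℝ → ℝ := Function.invFun g1

/-- `g = g₂ ∘ g₁⁻¹`. -/
noncomputable def gfn (t : ℝ) : ℝ := g2 (g1inv t)

/-!
Since `g₁' = Φ` and `g₂' = 2 g₁`, each of `Φ / φ`, `g₁ / Φ`, `g₂ / g₁` is, up to a constant, the
ratio of the derivatives of the next one, so by the monotone form of l'Hôpital's rule at `-∞` the
increase of `Φ / φ` (whose derivative is `g₁ / φ > 0`) passes to `g₁ / Φ` and then to `g₂ / g₁`.
The increase of `g₁ / Φ` says that `g` is strictly convex, as `2 g₁ / Φ = g₂' / g₁'`; that of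
`g₂ / g₁` says that `g(t) / t` is strictly increasing.

The left-hand side of the equation for `ρ*` is `G(πδ) + G((1 - π)δ)` for the perspective
`G(q) = q g(c / q)` with `c = ρ / (2m)`, and `G` increases in `c`, decreases in `q` and is convex in
`q`. Hence it increases in `ρ` and decreases in `m`, in `δ` and, the two arguments of `G` having the
fixed sum `δ`, in `π ≤ 1/2`; the solution therefore increases in each parameter.
-/

open Filter Set Topology

section Order

variable {α β γ : Type*}

theorem strictMonoOn_of_strictAntiOn_level [Preorder α] [LinearOrder β] [Preorder γ]
    {F : α → β → γ} {ρ : α → β} {A : Set α} {B : Set β} {c : γ}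
    (hρ : ∀ a ∈ A, ρ a ∈ B ∧ F a (ρ a) = c) (hmono : ∀ a ∈ A, MonotoneOn (F a) B)
    (hanti : ∀ b ∈ B, StrictAntiOn (fun a => F a b) A) : StrictMonoOn ρ A := by
  intro a ha a' ha' haa'
  obtain ⟨hb, hc⟩ := hρ a ha
  obtain ⟨hb', hc'⟩ := hρ a' ha'
  refine (hmono a' ha').reflect_lt hb hb' ?_
  calc F a' (ρ a) < F a (ρ a) := hanti _ hb ha ha' haa'
    _ = F a' (ρ a') := hc.trans hc'.symm

theorem lt_of_strictMonoOn_Iic_of_tendsto_atBot [PartialOrder α] [IsCodirectedOrder α]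
    [NoMinOrder α] [Preorder β] [TopologicalSpace β] [OrderClosedTopology β] {f : α → β} {a : α}
    {l : β} (hf : StrictMonoOn f (Iic a)) (hl : Tendsto f atBot (𝓝 l)) : l < f a := by
  obtain ⟨b, hb⟩ := exists_lt a
  have : Nonempty α := ⟨a⟩
  have hle : l ≤ f b := le_of_tendsto hl <| (eventually_le_atBot b).mono fun x hx =>
    hf.monotoneOn (mem_Iic.2 (hx.trans hb.le)) hb.le hx
  exact hle.trans_lt (hf hb.le le_rfl hb)

end Order

section Convex

variable {𝕜 : Type*} [Field 𝕜] [LinearOrder 𝕜] [IsStrictOrderedRing 𝕜] {f : 𝕜 → 𝕜}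

theorem add_lt_add_of_strictConvexOn {s : Set 𝕜} (hf : StrictConvexOn 𝕜 s f) {x y u v : 𝕜}
    (hx : x ∈ s) (hy : y ∈ s) (hxu : x < u) (huy : u < y) (huv : u + v = x + y) :
    f u + f v < f x + f y := by
  have hxy : 0 < y - x := sub_pos.2 (hxu.trans huy)
  obtain ⟨a, b, ha, hb, hab, rfl⟩ : ∃ a b : 𝕜, 0 < a ∧ 0 < b ∧ a + b = 1 ∧ a * x + b * y = u :=
    ⟨(y - u) / (y - x), (u - x) / (y - x), div_pos (sub_pos.2 huy) hxy,
      div_pos (sub_pos.2 hxu) hxy, by field_simp; ring, by field_simp; ring⟩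
  obtain rfl : v = b * x + a * y := by linear_combination huv - (x + y) * hab
  have hu := hf.2 hx hy (hxu.trans huy).ne ha hb hab
  have hv := hf.2 hx hy (hxu.trans huy).ne hb ha ((add_comm b a).trans hab)
  simp only [smul_eq_mul] at hu hv
  linear_combination hu + hv + (f x + f y) * hab

theorem strictConvexOn_mul_comp_div (hf : StrictConvexOn 𝕜 (Ioi 0) f) {c : 𝕜} (hc : 0 < c) :
    StrictConvexOn 𝕜 (Ioi 0) fun q => q * f (c / q) := by
  refine ⟨convex_Ioi 0, fun p (hp : 0 < p) q (hq : 0 < q) hpq a b ha hb hab => ?_⟩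
  simp only [smul_eq_mul]
  have hr : 0 < a * p + b * q := by positivity
  have hne : c / p ≠ c / q := fun h => hpq <| by
    simpa [hp.ne', hq.ne', hc.ne', div_eq_div_iff, eq_comm] using h
  have hweights : a * p / (a * p + b * q) + b * q / (a * p + b * q) = 1 := by
    rw [← add_div, div_self hr.ne']
  have hpoint : a * p / (a * p + b * q) * (c / p) + b * q / (a * p + b * q) * (c / q) =
      c / (a * p + b * q) := by
    field_simp
    exact hab
  have hconv := hf.2 (div_pos hc hp) (div_pos hc hq) hne (div_pos (mul_pos ha hp) hr)
    (div_pos (mul_pos hb hq) hr) hweights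
  simp only [smul_eq_mul, hpoint] at hconv
  calc (a * p + b * q) * f (c / (a * p + b * q))
      < (a * p + b * q) * (a * p / (a * p + b * q) * f (c / p) +
          b * q / (a * p + b * q) * f (c / q)) := mul_lt_mul_of_pos_left hconv hr
    _ = a * (p * f (c / p)) + b * (q * f (c / q)) := by field_simp

end Convex

section DerivRatio

variable {f f' h h' : ℝ → ℝ}

theorem strictMono_div_of_strictMono_deriv_div (hf : ∀ x, HasDerivAt f (f' x) x)
    (hh : ∀ x, HasDerivAt h (h' x) x) (hh' : ∀ x, 0 < h' x) (hf₀ : Tendsto f atBot (𝓝 0))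
    (hh₀ : Tendsto h atBot (𝓝 0)) (hmono : StrictMono fun x => f' x / h' x) :
    StrictMono fun x => f x / h x := by
  have hpos x : 0 < h x := lt_of_strictMonoOn_Iic_of_tendsto_atBot
    ((strictMono_of_hasDerivAt_pos hh hh').strictMonoOn _) hh₀
  refine strictMono_of_hasDerivAt_pos (fun x => (hf x).div (hh x) (hpos x).ne') fun x => ?_
  have hderiv y : HasDerivAt (fun y => f' x / h' x * h y - f y) (f' x / h' x * h' y - f' y) y :=
    ((hh y).const_mul _).sub (hf y)
  have hstrict : StrictMonoOn (fun y => f' x / h' x * h y - f y) (Iic x) := by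
    refine strictMonoOn_of_hasDerivWithinAt_pos (convex_Iic x)
      (fun y _ => (hderiv y).continuousAt.continuousWithinAt)
      (fun y _ => (hderiv y).hasDerivWithinAt) fun y hy => ?_
    rw [interior_Iic] at hy
    exact sub_pos.2 ((div_lt_iff₀ (hh' y)).1 (hmono hy))
  have hlim : Tendsto (fun y => f' x / h' x * h y - f y) atBot (𝓝 0) := by
    simpa using (hh₀.const_mul (f' x / h' x)).sub hf₀
  have hx : 0 < f' x / h' x * h x - f x :=
    lt_of_strictMonoOn_Iic_of_tendsto_atBot (a := x) hstrict hlim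
  have hnum : 0 < f' x * h x - f x * h' x := by
    have := mul_pos hx (hh' x)
    rwa [sub_mul, mul_right_comm, div_mul_cancel₀ _ (hh' x).ne'] at this
  exact div_pos hnum (pow_pos (hpos x) 2)

theorem exists_deriv_div_eq_slope (hf : ∀ x, HasDerivAt f (f' x) x)
    (hh : ∀ x, HasDerivAt h (h' x) x) (hh' : ∀ x, 0 < h' x) {a b : ℝ} (hab : a < b) :
    ∃ ξ ∈ Ioo a b, (f b - f a) / (h b - h a) = f' ξ / h' ξ := by
  obtain ⟨ξ, hξ, hratio⟩ := exists_ratio_hasDerivAt_eq_ratio_slope f f' hab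
    (fun x _ => (hf x).continuousAt.continuousWithinAt) (fun x _ => hf x) h h'
    (fun x _ => (hh x).continuousAt.continuousWithinAt) fun x _ => hh x
  have hsub : 0 < h b - h a := sub_pos.2 (strictMono_of_hasDerivAt_pos hh hh' hab)
  refine ⟨ξ, hξ, ?_⟩
  rw [div_eq_div_iff hsub.ne' (hh' ξ).ne', ← hratio, mul_comm]

theorem strictConvexOn_comp_of_strictMono_deriv_div (hf : ∀ x, HasDerivAt f (f' x) x)
    (hh : ∀ x, HasDerivAt h (h' x) x) (hh' : ∀ x, 0 < h' x)
    (hmono : StrictMono fun x => f' x / h' x) {s : Set ℝ} (hs : Convex ℝ s) {u : ℝ → ℝ}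
    (hu : RightInvOn u h s) : StrictConvexOn ℝ s (f ∘ u) := by
  refine strictConvexOn_of_slope_strict_mono_adjacent hs fun {x y z} hx hz hxy hyz => ?_
  have hy : y ∈ s := hs.ordConnected.out hx hz ⟨hxy.le, hyz.le⟩
  have hu_lt {a b : ℝ} (ha : a ∈ s) (hb : b ∈ s) (hab : a < b) : u a < u b :=
    (strictMono_of_hasDerivAt_pos hh hh').lt_iff_lt.1 (by rwa [hu ha, hu hb])
  obtain ⟨ξ, hξ, hleft⟩ := exists_deriv_div_eq_slope hf hh hh' (hu_lt hx hy hxy)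
  obtain ⟨η, hη, hright⟩ := exists_deriv_div_eq_slope hf hh hh' (hu_lt hy hz hyz)
  rw [hu hx, hu hy] at hleft
  rw [hu hy, hu hz] at hright
  simpa only [Function.comp_apply, hleft, hright] using hmono (hξ.2.trans hη.1)

end DerivRatio

section Gaussian

theorem normPDF_pos (x : ℝ) : 0 < normPDF x := by
  unfold normPDF
  positivity

theorem hasDerivAt_normPDF (x : ℝ) : HasDerivAt normPDF (-x * normPDF x) x := by
  have hexponent : HasDerivAt (fun x : ℝ => -x ^ 2 / 2) (-x) x :=
    ((hasDerivAt_pow 2 x).neg.div_const 2).congr_deriv (by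
      simp only [Nat.cast_ofNat]; ring)
  exact (hexponent.exp.div_const _).congr_deriv (by unfold normPDF; ring)

theorem continuous_normPDF : Continuous normPDF :=
  continuous_iff_continuousAt.2 fun x => (hasDerivAt_normPDF x).continuousAt

theorem normPDF_eq_const_mul_exp :
    normPDF = fun x => (√(2 * Real.pi))⁻¹ * Real.exp (-(1 / 2) * x ^ 2) := by
  funext x
  rw [normPDF, div_eq_inv_mul]
  ring_nf

theorem integrable_normPDF : Integrable normPDF := by
  rw [normPDF_eq_const_mul_exp]
  exact (integrable_exp_neg_mul_sq one_half_pos).const_mul _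

theorem integrable_mul_normPDF : Integrable fun x => x * normPDF x := by
  simpa only [normPDF_eq_const_mul_exp, mul_left_comm] using
    (integrable_mul_exp_neg_mul_sq one_half_pos).const_mul (√(2 * Real.pi))⁻¹

theorem tendsto_pow_mul_normPDF_atBot (k : ℕ) :
    Tendsto (fun x => x ^ k * normPDF x) atBot (𝓝 0) := by
  have hexp := ((tendsto_rpow_abs_mul_exp_neg_mul_sq_cocompact one_half_pos k).mono_left
    atBot_le_cocompact).const_mul (√(2 * Real.pi))⁻¹
  rw [mul_zero] at hexp
  refine tendsto_zero_iff_norm_tendsto_zero.2 (hexp.congr fun x => ?_)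
  rw [norm_mul, norm_pow, Real.norm_eq_abs, Real.norm_of_nonneg (normPDF_pos x).le,
    normPDF_eq_const_mul_exp, Real.rpow_natCast, mul_left_comm]

theorem hasDerivAt_normCDF (x : ℝ) : HasDerivAt normCDF (normPDF x) x := by
  have hsplit : normCDF = fun y => (∫ t in (0 : ℝ)..y, normPDF t) + normCDF 0 := by
    funext y
    rw [← sub_eq_iff_eq_add]
    exact intervalIntegral.integral_Iic_sub_Iic integrable_normPDF.integrableOn
      integrable_normPDF.integrableOn
  rw [hsplit]
  exact (continuous_normPDF.integral_hasStrictDerivAt 0 x).hasDerivAt.add_const _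

theorem strictMono_normCDF : StrictMono normCDF :=
  strictMono_of_hasDerivAt_pos hasDerivAt_normCDF normPDF_pos

theorem tendsto_normCDF_atBot : Tendsto normCDF atBot (𝓝 0) :=
  tendsto_integral_Iic_zero tendsto_id

theorem normCDF_pos (x : ℝ) : 0 < normCDF x :=
  lt_of_strictMonoOn_Iic_of_tendsto_atBot (strictMono_normCDF.strictMonoOn _)
    tendsto_normCDF_atBot

theorem normCDF_le_normPDF {x : ℝ} (hx : x ≤ -1) : normCDF x ≤ normPDF x := by
  have hint : IntegrableOn (fun t => -t * normPDF t) (Iic x) := by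
    simpa only [neg_mul] using integrable_mul_normPDF.fun_neg.integrableOn
  calc normCDF x ≤ ∫ t in Iic x, -t * normPDF t :=
        setIntegral_mono_on integrable_normPDF.integrableOn hint measurableSet_Iic fun t ht =>
          le_mul_of_one_le_left (normPDF_pos t).le (by linarith [mem_Iic.1 ht])
    _ = normPDF x := by
        rw [integral_Iic_of_hasDerivAt_of_tendsto' (fun t _ => hasDerivAt_normPDF t) hint
          (by simpa using tendsto_pow_mul_normPDF_atBot 0), sub_zero]

theorem tendsto_pow_mul_normCDF_atBot (k : ℕ) :
    Tendsto (fun x => x ^ k * normCDF x) atBot (𝓝 0) := by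
  refine squeeze_zero_norm' ?_
    (tendsto_zero_iff_norm_tendsto_zero.1 (tendsto_pow_mul_normPDF_atBot k))
  filter_upwards [eventually_le_atBot (-1 : ℝ)] with x hx
  simp only [norm_mul, Real.norm_of_nonneg (normCDF_pos x).le,
    Real.norm_of_nonneg (normPDF_pos x).le]
  gcongr
  exact normCDF_le_normPDF hx

end Gaussian

section PartialMoments

theorem hasDerivAt_g1 (x : ℝ) : HasDerivAt g1 (normCDF x) x :=
  (((hasDerivAt_id x).mul (hasDerivAt_normCDF x)).add (hasDerivAt_normPDF x)).congr_deriv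
    (by simp)

theorem hasDerivAt_g2 (x : ℝ) : HasDerivAt g2 (2 * g1 x) x :=
  ((((hasDerivAt_pow 2 x).add_const 1).mul (hasDerivAt_normCDF x)).add
    ((hasDerivAt_id x).mul (hasDerivAt_normPDF x))).congr_deriv (by
      simp only [g1, Nat.cast_ofNat, id_eq]; ring)

theorem tendsto_g1_atBot : Tendsto g1 atBot (𝓝 0) := by
  simpa +unfoldPartialApp [g1] using
    (tendsto_pow_mul_normCDF_atBot 1).add (tendsto_pow_mul_normPDF_atBot 0)

theorem tendsto_g2_atBot : Tendsto g2 atBot (𝓝 0) := by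
  simpa +unfoldPartialApp [g2, add_mul] using
    ((tendsto_pow_mul_normCDF_atBot 2).add (tendsto_pow_mul_normCDF_atBot 0)).add
      (tendsto_pow_mul_normPDF_atBot 1)

theorem strictMono_g1 : StrictMono g1 :=
  strictMono_of_hasDerivAt_pos hasDerivAt_g1 normCDF_pos

theorem g1_pos (x : ℝ) : 0 < g1 x :=
  lt_of_strictMonoOn_Iic_of_tendsto_atBot (strictMono_g1.strictMonoOn _) tendsto_g1_atBot

theorem strictMono_g2 : StrictMono g2 :=
  strictMono_of_hasDerivAt_pos hasDerivAt_g2 fun x => mul_pos two_pos (g1_pos x)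

theorem tendsto_g1_atTop : Tendsto g1 atTop atTop := by
  refine tendsto_atTop_mono' _ ?_ (tendsto_id.atTop_mul_const (normCDF_pos 0))
  filter_upwards [eventually_ge_atTop (0 : ℝ)] with x hx
  have hcdf : x * normCDF 0 ≤ x * normCDF x :=
    mul_le_mul_of_nonneg_left (strictMono_normCDF.monotone hx) hx
  exact hcdf.trans (le_add_of_nonneg_right (normPDF_pos x).le)

theorem surjOn_g1 : SurjOn g1 univ (Ioi 0) := by
  intro t ht
  rw [image_univ]
  have hcont : Continuous g1 :=
    continuous_iff_continuousAt.2 fun x => (hasDerivAt_g1 x).continuousAt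
  exact mem_range_of_exists_le_of_exists_ge hcont
    (tendsto_g1_atBot.eventually_le_const ht).exists
    (tendsto_g1_atTop.eventually_ge_atTop t).exists

theorem strictMono_normCDF_div_normPDF : StrictMono fun x => normCDF x / normPDF x := by
  refine strictMono_of_hasDerivAt_pos (f' := fun x => g1 x / normPDF x) (fun x => ?_)
    fun x => div_pos (g1_pos x) (normPDF_pos x)
  have hne := (normPDF_pos x).ne'
  refine ((hasDerivAt_normCDF x).div (hasDerivAt_normPDF x) hne).congr_deriv ?_
  rw [g1]
  field_simp
  ring

theorem strictMono_g1_div_normCDF : StrictMono fun x => g1 x / normCDF x :=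
  strictMono_div_of_strictMono_deriv_div hasDerivAt_g1 hasDerivAt_normCDF normPDF_pos
    tendsto_g1_atBot tendsto_normCDF_atBot strictMono_normCDF_div_normPDF

theorem strictMono_two_mul_g1_div_normCDF : StrictMono fun x => 2 * g1 x / normCDF x := by
  simpa only [mul_div_assoc] using strictMono_g1_div_normCDF.const_mul two_pos

theorem strictMono_g2_div_g1 : StrictMono fun x => g2 x / g1 x :=
  strictMono_div_of_strictMono_deriv_div hasDerivAt_g2 hasDerivAt_g1 normCDF_pos
    tendsto_g2_atBot tendsto_g1_atBot strictMono_two_mul_g1_div_normCDF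

end PartialMoments

section Composite

theorem rightInvOn_g1inv : RightInvOn g1inv g1 (Ioi 0) := fun t ht =>
  Function.invFun_eq (by simpa using surjOn_g1 ht)

theorem strictMonoOn_g1inv : StrictMonoOn g1inv (Ioi 0) := fun t ht u hu htu =>
  strictMono_g1.lt_iff_lt.1 (by rwa [rightInvOn_g1inv ht, rightInvOn_g1inv hu])

theorem strictMonoOn_gfn : StrictMonoOn gfn (Ioi 0) :=
  strictMono_g2.comp_strictMonoOn strictMonoOn_g1inv

theorem strictMonoOn_gfn_div_self : StrictMonoOn (fun t => gfn t / t) (Ioi 0) :=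
  (strictMono_g2_div_g1.comp_strictMonoOn strictMonoOn_g1inv).congr fun t ht => by
    simp only [Function.comp_apply, rightInvOn_g1inv ht, gfn]

theorem strictConvexOn_gfn : StrictConvexOn ℝ (Ioi 0) gfn :=
  strictConvexOn_comp_of_strictMono_deriv_div hasDerivAt_g2 hasDerivAt_g1 normCDF_pos
    strictMono_two_mul_g1_div_normCDF (convex_Ioi 0) rightInvOn_g1inv

end Composite

section Perspective

/-- The perspective `q g(c / q)` of `g`, through which all parameters enter the equation for
`ρ*`. -/
noncomputable def gPerspective (c q : ℝ) : ℝ := q * gfn (c / q)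

theorem strictMonoOn_gPerspective_left {q : ℝ} (hq : 0 < q) :
    StrictMonoOn (fun c => gPerspective c q) (Ioi 0) := fun _ hc _ hc' hcc' =>
  mul_lt_mul_of_pos_left
    (strictMonoOn_gfn (div_pos hc hq) (div_pos hc' hq) (div_lt_div_of_pos_right hcc' hq)) hq

theorem strictAntiOn_gPerspective_right {c : ℝ} (hc : 0 < c) :
    StrictAntiOn (gPerspective c) (Ioi 0) := by
  have heq {q : ℝ} (hq : 0 < q) : gPerspective c q = c * (gfn (c / q) / (c / q)) := by
    rw [gPerspective]
    field_simp
  intro q hq q' hq' hqq'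
  rw [heq hq, heq hq']
  exact mul_lt_mul_of_pos_left (strictMonoOn_gfn_div_self (div_pos hc hq') (div_pos hc hq)
    (div_lt_div_of_pos_left hc hq hqq')) hc

theorem strictConvexOn_gPerspective {c : ℝ} (hc : 0 < c) :
    StrictConvexOn ℝ (Ioi 0) (gPerspective c) :=
  strictConvexOn_mul_comp_div strictConvexOn_gfn hc

end Perspective

section CosineEquation

/-- The function of `r` whose value at `r = ρ*(p, m, δ)` is `1`: the left-hand side of the equation
defining `ρ*`, with `ρ²` moved to it. -/
noncomputable def cosineLHS (p m δ r : ℝ) : ℝ :=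
  p * δ * gfn (r / (2 * p * m * δ)) + (1 - p) * δ * gfn (r / (2 * (1 - p) * m * δ)) + r ^ 2

theorem cosineLHS_eq_gPerspective (p m δ r : ℝ) :
    cosineLHS p m δ r =
      gPerspective (r / (2 * m)) (p * δ) + gPerspective (r / (2 * m)) ((1 - p) * δ) + r ^ 2 := by
  have hscale (q : ℝ) : r / (2 * q * m * δ) = r / (2 * m) / (q * δ) := by
    rw [div_div]
    ring_nf
  rw [cosineLHS, gPerspective, gPerspective, hscale, hscale]

variable {p m δ r : ℝ}

theorem strictMonoOn_cosineLHS (hp : p ∈ Ioo 0 1) (hm : 0 < m) (hδ : 0 < δ) :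
    StrictMonoOn (cosineLHS p m δ) (Ioi 0) := by
  intro r (hr : 0 < r) s (hs : 0 < s) hrs
  have hscale : r / (2 * m) < s / (2 * m) := by gcongr
  have hpos {t : ℝ} (ht : 0 < t) : 0 < t / (2 * m) := by positivity
  simp only [cosineLHS_eq_gPerspective]
  gcongr ?_ + ?_ + ?_ ^ 2
  · exact strictMonoOn_gPerspective_left (mul_pos hp.1 hδ) (hpos hr) (hpos hs) hscale
  · exact strictMonoOn_gPerspective_left (mul_pos (sub_pos.2 hp.2) hδ) (hpos hr) (hpos hs) hscale

theorem strictAntiOn_cosineLHS_signal (hp : p ∈ Ioo 0 1) (hδ : 0 < δ) (hr : 0 < r) :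
    StrictAntiOn (fun m => cosineLHS p m δ r) (Ioi 0) := by
  intro m (hm : 0 < m) m' (hm' : 0 < m') hmm'
  have hscale : r / (2 * m') < r / (2 * m) := by gcongr
  have hpos {m : ℝ} (hm : 0 < m) : 0 < r / (2 * m) := by positivity
  simp only [cosineLHS_eq_gPerspective]
  gcongr ?_ + ?_ + _
  · exact strictMonoOn_gPerspective_left (mul_pos hp.1 hδ) (hpos hm') (hpos hm) hscale
  · exact strictMonoOn_gPerspective_left (mul_pos (sub_pos.2 hp.2) hδ) (hpos hm') (hpos hm) hscale

theorem strictAntiOn_cosineLHS_aspect (hp : p ∈ Ioo 0 1) (hm : 0 < m) (hr : 0 < r) :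
    StrictAntiOn (fun δ => cosineLHS p m δ r) (Ioi 0) := by
  intro δ (hδ : 0 < δ) δ' (hδ' : 0 < δ') hδδ'
  have hanti := strictAntiOn_gPerspective_right (c := r / (2 * m)) (by positivity)
  have hp' : 0 < 1 - p := sub_pos.2 hp.2
  simp only [cosineLHS_eq_gPerspective]
  gcongr ?_ + ?_ + _
  · exact hanti (mul_pos hp.1 hδ) (mul_pos hp.1 hδ') (mul_lt_mul_of_pos_left hδδ' hp.1)
  · exact hanti (mul_pos hp' hδ) (mul_pos hp' hδ') (mul_lt_mul_of_pos_left hδδ' hp')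

theorem strictAntiOn_cosineLHS_imbalance (hm : 0 < m) (hδ : 0 < δ) (hr : 0 < r) :
    StrictAntiOn (fun p => cosineLHS p m δ r) (Ioc 0 (1 / 2)) := by
  intro p hp p' hp' hpp'
  have hlt : p' < 1 - p := by linarith [hp'.2]
  have hconv := add_lt_add_of_strictConvexOn
    (strictConvexOn_gPerspective (c := r / (2 * m)) (by positivity))
    (mul_pos hp.1 hδ) (mul_pos (hp'.1.trans hlt) hδ) (mul_lt_mul_of_pos_right hpp' hδ)
    (mul_lt_mul_of_pos_right hlt hδ) (v := (1 - p') * δ) (by ring)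
  simp only [cosineLHS_eq_gPerspective]
  gcongr

end CosineEquation

/-- Monotonicity of the limiting cosine angle `ρ*(π, m, δ)`:
strictly increasing in the signal strength `m`, in the aspect ratio `δ`, and in
the imbalance ratio `π` on `(0, 1/2)`. -/
theorem stmt_12 (ρstar : ℝ → ℝ → ℝ → ℝ)
    (hρstar : ∀ p m δ : ℝ, p ∈ Set.Ioo (0 : ℝ) 1 → 0 < m → 0 < δ →
      ρstar p m δ ∈ Set.Ioo (0 : ℝ) 1 ∧
      p * δ * gfn (ρstar p m δ / (2 * p * m * δ)) +
          (1 - p) * δ * gfn (ρstar p m δ / (2 * (1 - p) * m * δ)) =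
        1 - (ρstar p m δ) ^ 2)
    :
    (∀ p δ : ℝ, p ∈ Set.Ioo (0 : ℝ) 1 → 0 < δ →
      StrictMonoOn (fun m => ρstar p m δ) (Set.Ioi 0)) ∧
    (∀ p m : ℝ, p ∈ Set.Ioo (0 : ℝ) 1 → 0 < m →
      StrictMonoOn (fun δ => ρstar p m δ) (Set.Ioi 0)) ∧
    (∀ m δ : ℝ, 0 < m → 0 < δ →
      StrictMonoOn (fun p => ρstar p m δ) (Set.Ioo 0 (1 / 2))) := by
  have hlevel {p m δ : ℝ} (hp : p ∈ Ioo 0 1) (hm : 0 < m) (hδ : 0 < δ) :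
      ρstar p m δ ∈ Ioi 0 ∧ cosineLHS p m δ (ρstar p m δ) = 1 :=
    ⟨(hρstar p m δ hp hm hδ).1.1, add_eq_of_eq_sub (hρstar p m δ hp hm hδ).2⟩
  have hhalf : Ioo (0 : ℝ) (1 / 2) ⊆ Ioo 0 1 := Ioo_subset_Ioo_right (by norm_num)
  refine ⟨fun p δ hp hδ => ?_, fun p m hp hm => ?_, fun m δ hm hδ => ?_⟩
  · exact strictMonoOn_of_strictAntiOn_level (F := fun m => cosineLHS p m δ)
      (fun _ hm => hlevel hp hm hδ) (fun _ hm => (strictMonoOn_cosineLHS hp hm hδ).monotoneOn)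
      fun _ hr => strictAntiOn_cosineLHS_signal hp hδ hr
  · exact strictMonoOn_of_strictAntiOn_level (F := fun δ => cosineLHS p m δ)
      (fun _ hδ => hlevel hp hm hδ) (fun _ hδ => (strictMonoOn_cosineLHS hp hm hδ).monotoneOn)
      fun _ hr => strictAntiOn_cosineLHS_aspect hp hm hr
  · exact strictMonoOn_of_strictAntiOn_level (F := fun p => cosineLHS p m δ)
      (fun _ hp => hlevel (hhalf hp) hm hδ)
      (fun _ hp => (strictMonoOn_cosineLHS (hhalf hp) hm hδ).monotoneOn)
      fun _ hr => (strictAntiOn_cosineLHS_imbalance hm hδ hr).mono Ioo_subset_Ioc_self
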